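/- Let R be a commutative semiring, M a measurement cover on a finite set X with finite outcome set O, and e = (e_C)_{C∈M} a compatible empirical model over M with values in R. Then the following are equivalent: (i) e has a realization by a factorizable hidden-variable model, i.e. there exist a finite set Λ, an R-distribution h_Λ on Λ, and for each λ ∈ Λ a compatible family (h^λ_C)_{C∈M} of R-distributions on sections over the contexts, such that h^λ_C(s) = Π_{m∈C} (h^λ_C|{m})(s|{m}) for every λ, C ∈ M, and section s over C, and e_C(s) = Σ_{λ∈Λ} h^λ_C(s)·h_Λ(λ) for every C ∈ M and section s over C; (ii) e has a global section, i.e. an R-distribution d on O^X with d|C = e_C for every C ∈ M. -/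

import Mathlib

open Finset

/-- Restriction of a section over `U` to a subset `V ⊆ U`. -/
def resSec {X O : Type} {U V : Finset X} (h : V ⊆ U) (s : {x // x ∈ U} → O) :
    {x // x ∈ V} → O :=
  fun v => s ⟨v.1, h v.2⟩

/-- Restriction of a global assignment `t : X → O` to the context `C`. -/
def resGlob {X O : Type} (t : X → O) (C : Finset X) : {x // x ∈ C} → O :=
  fun c => t c.1

/-- Marginal of an `R`-valued distribution on sections over `U` to `V ⊆ U`:
`(d|V)(s) = ∑_{s' restricting to s} d(s')`. -/
def marg {X O R : Type} [DecidableEq X] [Fintype O] [DecidableEq O]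
    [AddCommMonoid R] {U V : Finset X} (h : V ⊆ U)
    (d : ({x // x ∈ U} → O) → R) : ({x // x ∈ V} → O) → R :=
  fun s => ∑ s' ∈ univ.filter (fun s' => resSec h s' = s), d s'

/-- Marginal of a distribution on global assignments to the context `C`. -/
def globMarg {X O R : Type} [Fintype X] [DecidableEq X] [Fintype O] [DecidableEq O]
    [AddCommMonoid R] (d : (X → O) → R) (C : Finset X) : ({x // x ∈ C} → O) → R :=
  fun s => ∑ t ∈ univ.filter (fun t => resGlob t C = s), d t

/-! A factorizable compatible family over a cover is the family of marginals of one product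
distribution on `X → O`: compatibility makes the one-measurement marginals independent of the
context in which they are computed. Hence the mixture of these product distributions over the values
of the hidden variable is a global section. Conversely, every distribution `d` on `X → O` is the
mixture, with weights `d t`, of the point masses at the assignments `t`, and a point mass is a
product distribution. -/

lemma resSec_singleton {X O : Type} {U : Finset X} (s : {x // x ∈ U} → O) (m : {x // x ∈ U}) :
    resSec (singleton_subset_iff.mpr m.2) s = fun _ => s m := by
  funext ⟨x, hx⟩
  obtain rfl := mem_singleton.mp hx
  rfl

/-- The product distribution on `X → O` with one-measurement distributions `p x`; it is normalized
when all the `p x` are. -/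
def productDist {X O R : Type} [Fintype X] [CommMonoid R] (p : X → O → R) (t : X → O) : R :=
  ∏ x, p x (t x)

lemma productDist_single {X O R : Type} [Fintype X] [DecidableEq O]
    [CommMonoidWithZero R] (t : X → O) :
    productDist (fun x => Pi.single (t x) (1 : R)) = Pi.single t 1 := by
  funext t'
  simp only [productDist, Pi.single_apply, prod_ite_zero, prod_const_one, mem_univ, true_imp_iff,
    funext_iff]

lemma sum_productDist {X O R : Type} [Fintype X] [DecidableEq X] [Fintype O] [CommSemiring R]
    {p : X → O → R} (hp : ∀ x, ∑ o, p x o = 1) : ∑ t, productDist p t = 1 := by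
  simp only [productDist, ← Fintype.prod_sum, hp, prod_const_one]

section Marginals

variable {X O R : Type} [DecidableEq X] [Fintype O] [DecidableEq O] [AddCommMonoid R]
  {U V W : Finset X}

lemma sum_marg (h : V ⊆ U) (d : ({x // x ∈ U} → O) → R) : ∑ s, marg h d s = ∑ s, d s :=
  sum_fiberwise _ _ _

lemma marg_marg (hVU : V ⊆ U) (hWV : W ⊆ V) (d : ({x // x ∈ U} → O) → R) :
    marg hWV (marg hVU d) = marg (hWV.trans hVU) d := by
  funext s
  simp only [marg, sum_fiberwise_eq_sum_filter, mem_filter_univ]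
  rfl

lemma sum_marg_singleton {x : X} (hx : {x} ⊆ U) (d : ({x // x ∈ U} → O) → R) :
    ∑ o, marg hx d (fun _ => o) = ∑ s, d s := by
  rw [← sum_marg hx]
  exact (Equiv.funUnique {y // y ∈ ({x} : Finset X)} O).symm.sum_comp (marg hx d)

variable [Fintype X]

lemma sum_globMarg (d : (X → O) → R) (C : Finset X) : ∑ s, globMarg d C s = ∑ t, d t :=
  sum_fiberwise _ _ _

lemma marg_globMarg (h : V ⊆ U) (d : (X → O) → R) : marg h (globMarg d U) = globMarg d V := by
  funext s
  simp only [marg, globMarg, sum_fiberwise_eq_sum_filter, mem_filter_univ]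
  rfl

end Marginals

lemma globMarg_sum_mul {X O R : Type} {Λ : Type*} [Fintype X] [DecidableEq X] [Fintype O]
    [DecidableEq O] [NonUnitalNonAssocSemiring R] [Fintype Λ] (d : Λ → (X → O) → R) (w : Λ → R)
    (C : Finset X) (s : {x // x ∈ C} → O) :
    globMarg (fun t => ∑ l, d l t * w l) C s = ∑ l, globMarg (d l) C s * w l := by
  simp only [globMarg, sum_mul]
  exact sum_comm

lemma filter_resGlob_eq_piFinset {X O : Type} [Fintype X] [DecidableEq X] [Fintype O]
    [DecidableEq O] (C : Finset X) (s : {x // x ∈ C} → O) :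
    univ.filter (fun t => resGlob t C = s) =
      Fintype.piFinset fun x => if hx : x ∈ C then {s ⟨x, hx⟩} else univ := by
  ext t
  simp only [mem_filter_univ, Fintype.mem_piFinset, funext_iff, Subtype.forall, resGlob]
  refine forall_congr' fun x => ?_
  split_ifs with hx <;> simp [hx]

lemma globMarg_productDist {X O R : Type} [Fintype X] [DecidableEq X] [Fintype O] [DecidableEq O]
    [CommSemiring R] {p : X → O → R} (hp : ∀ x, ∑ o, p x o = 1) (C : Finset X)
    (s : {x // x ∈ C} → O) :
    globMarg (productDist p) C s = ∏ m : {x // x ∈ C}, p m (s m) := by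
  let F (x : X) : Finset O := if hx : x ∈ C then {s ⟨x, hx⟩} else univ
  have outside (x : X) (hx : x ∉ C) : ∑ o ∈ F x, p x o = 1 := by
    simp only [F, dif_neg hx, hp]
  have inside (m : {x // x ∈ C}) : ∑ o ∈ F m, p m o = p m (s m) := by
    simp only [F, dif_pos m.2, sum_singleton]
  calc globMarg (productDist p) C s
      = ∑ t ∈ Fintype.piFinset F, ∏ x, p x (t x) := by
        rw [globMarg, filter_resGlob_eq_piFinset]; rfl
    _ = ∏ x, ∑ o ∈ F x, p x o := (prod_univ_sum F p).symm
    _ = ∏ x ∈ C, ∑ o ∈ F x, p x o :=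
        (prod_subset (subset_univ C) fun x _ hx => outside x hx).symm
    _ = ∏ m : {x // x ∈ C}, ∑ o ∈ F m, p m o := (prod_coe_sort C _).symm
    _ = ∏ m : {x // x ∈ C}, p m (s m) := prod_congr rfl fun m _ => inside m

section Models

variable {X O R : Type} [DecidableEq X] [Fintype O] [DecidableEq O]

/-- Compatibility of a family `h` of functions on sections: the members indexed by any two contexts
of `MM` have the same marginal on the intersection. Values of `h` outside `MM` are irrelevant. -/
def IsCompatibleFamily [AddCommMonoid R] (MM : Finset (Finset X))
    (h : (C : Finset X) → ({x // x ∈ C} → O) → R) : Prop :=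
  ∀ C ∈ MM, ∀ C' ∈ MM,
    marg (show C ∩ C' ⊆ C from inter_subset_left) (h C) =
    marg (show C ∩ C' ⊆ C' from inter_subset_right) (h C')

/-- Factorizable empirical models: compatible families of distributions over the contexts in `MM`,
each of which is the product of its one-measurement marginals. -/
def IsFactorizableModel [CommSemiring R] (MM : Finset (Finset X))
    (h : (C : Finset X) → ({x // x ∈ C} → O) → R) : Prop :=
  (∀ C ∈ MM, ∑ s, h C s = 1) ∧
  IsCompatibleFamily MM h ∧
  ∀ C ∈ MM, ∀ s : {x // x ∈ C} → O,
    h C s = ∏ m : {x // x ∈ C},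
      marg (singleton_subset_iff.mpr m.2) (h C) (resSec (singleton_subset_iff.mpr m.2) s)

/-- `w` and `h` form a factorizable hidden-variable model over `Λ` that realizes `e`: `w` is the
distribution of the hidden variable and `h l` the empirical model at the value `l`. -/
def IsFactorizableRealization [CommSemiring R] {Λ : Type*} [Fintype Λ] (MM : Finset (Finset X))
    (e : (C : Finset X) → ({x // x ∈ C} → O) → R)
    (w : Λ → R) (h : Λ → (C : Finset X) → ({x // x ∈ C} → O) → R) : Prop :=
  (∑ l, w l = 1) ∧ (∀ l, IsFactorizableModel MM (h l)) ∧
  ∀ C ∈ MM, ∀ s : {x // x ∈ C} → O, e C s = ∑ l, h l C s * w l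

/-- Global sections of `e`: distributions on global assignments whose marginals on the contexts in
`MM` are the members of `e`. -/
def IsGlobalSection [Fintype X] [CommSemiring R] (MM : Finset (Finset X))
    (e : (C : Finset X) → ({x // x ∈ C} → O) → R) (d : (X → O) → R) : Prop :=
  (∑ t, d t = 1) ∧ ∀ C ∈ MM, ∀ s : {x // x ∈ C} → O, globMarg d C s = e C s

lemma IsCompatibleFamily.marg_eq [AddCommMonoid R] {MM : Finset (Finset X)}
    {h : (C : Finset X) → ({x // x ∈ C} → O) → R} (hh : IsCompatibleFamily MM h)
    {C C' V : Finset X} (hC : C ∈ MM) (hC' : C' ∈ MM) (hV : V ⊆ C) (hV' : V ⊆ C') :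
    marg hV (h C) = marg hV' (h C') := by
  have restricted := congrArg (marg (subset_inter hV hV')) (hh C hC C' hC')
  rwa [marg_marg, marg_marg] at restricted

lemma IsFactorizableRealization.comp_equiv [CommSemiring R] {Λ Λ' : Type*} [Fintype Λ]
    [Fintype Λ'] {MM : Finset (Finset X)} {e : (C : Finset X) → ({x // x ∈ C} → O) → R}
    {w : Λ → R} {h : Λ → (C : Finset X) → ({x // x ∈ C} → O) → R}
    (H : IsFactorizableRealization MM e w h) (E : Λ' ≃ Λ) :
    IsFactorizableRealization MM e (w ∘ E) (h ∘ E) := by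
  obtain ⟨hw, hh, he⟩ := H
  refine ⟨(E.sum_comp w).trans hw, fun l => hh (E l), fun C hC s => ?_⟩
  rw [he C hC s]
  exact (E.sum_comp fun l => h l C s * w l).symm

variable [Fintype X] [CommSemiring R]

lemma isFactorizableModel_globMarg_productDist (MM : Finset (Finset X)) {p : X → O → R}
    (hp : ∀ x, ∑ o, p x o = 1) : IsFactorizableModel MM (globMarg (productDist p)) := by
  refine ⟨fun C _ => ?_, fun C _ C' _ => ?_, fun C _ s => ?_⟩
  · rw [sum_globMarg, sum_productDist hp]
  · rw [marg_globMarg, marg_globMarg]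
  · rw [globMarg_productDist hp]
    refine prod_congr rfl fun m _ => ?_
    rw [marg_globMarg, resSec_singleton, globMarg_productDist hp, Fintype.prod_unique]
    rfl

lemma IsFactorizableModel.exists_eq_globMarg_productDist {MM : Finset (Finset X)}
    (hcov : ∀ x : X, ∃ C ∈ MM, x ∈ C) {h : (C : Finset X) → ({x // x ∈ C} → O) → R}
    (hh : IsFactorizableModel MM h) :
    ∃ p : X → O → R, (∀ x, ∑ o, p x o = 1) ∧ ∀ C ∈ MM, h C = globMarg (productDist p) C := by
  obtain ⟨hsum, hcompat, hfact⟩ := hh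
  choose c hc hxc using hcov
  let p (x : X) (o : O) : R := marg (singleton_subset_iff.mpr (hxc x)) (h (c x)) fun _ => o
  have hp (x : X) : ∑ o, p x o = 1 := by
    rw [sum_marg_singleton, hsum (c x) (hc x)]
  refine ⟨p, hp, fun C hC => funext fun s => ?_⟩
  rw [hfact C hC s, globMarg_productDist hp]
  refine prod_congr rfl fun m _ => ?_
  rw [resSec_singleton, hcompat.marg_eq hC (hc m)]

lemma IsFactorizableRealization.exists_isGlobalSection {Λ : Type*} [Fintype Λ]
    {MM : Finset (Finset X)} (hcov : ∀ x : X, ∃ C ∈ MM, x ∈ C)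
    {e : (C : Finset X) → ({x // x ∈ C} → O) → R} {w : Λ → R}
    {h : Λ → (C : Finset X) → ({x // x ∈ C} → O) → R}
    (H : IsFactorizableRealization MM e w h) : ∃ d, IsGlobalSection MM e d := by
  obtain ⟨hw, hh, he⟩ := H
  choose p hp hmarg using fun l => (hh l).exists_eq_globMarg_productDist hcov
  refine ⟨fun t => ∑ l, productDist (p l) t * w l, ?_, fun C hC s => ?_⟩
  · rw [sum_comm]
    simp only [← sum_mul, sum_productDist (hp _), one_mul, hw]
  · simp only [globMarg_sum_mul, he C hC s, hmarg _ C hC]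

lemma IsGlobalSection.isFactorizableRealization {MM : Finset (Finset X)}
    {e : (C : Finset X) → ({x // x ∈ C} → O) → R} {d : (X → O) → R}
    (H : IsGlobalSection MM e d) :
    IsFactorizableRealization MM e d fun t => globMarg (Pi.single t 1) := by
  obtain ⟨hd, hmarg⟩ := H
  refine ⟨hd, fun t => ?_, fun C hC s => ?_⟩
  · simp only [← productDist_single]
    exact isFactorizableModel_globMarg_productDist MM fun x => Fintype.sum_pi_single' (t x) 1
  · have mixture : d = fun t => ∑ t', (Pi.single t' 1 : (X → O) → R) t * d t' := by
      funext t
      simp only [Pi.single_apply, ite_mul, one_mul, zero_mul, Fintype.sum_ite_eq]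
    rw [← hmarg C hC s, ← globMarg_sum_mul, ← mixture]

theorem factorizable_hidden_variable_iff_global_section_general (MM : Finset (Finset X))
    (hcov : ∀ x : X, ∃ C ∈ MM, x ∈ C) (e : (C : Finset X) → ({x // x ∈ C} → O) → R) :
    (∃ (k : ℕ) (w : Fin k → R) (h : Fin k → (C : Finset X) → ({x // x ∈ C} → O) → R),
      IsFactorizableRealization MM e w h) ↔ ∃ d, IsGlobalSection MM e d := by
  constructor
  · rintro ⟨k, w, h, H⟩
    exact H.exists_isGlobalSection hcov
  · rintro ⟨d, hd⟩
    exact ⟨_, _, _, hd.isFactorizableRealization.comp_equiv (Fintype.equivFin (X → O)).symm⟩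

end Models

/-- Over any commutative semiring `R`, a compatible empirical model `e` on a
measurement cover has a realization by a factorizable hidden-variable model (a finite set
`Λ = Fin k` of hidden variables, a distribution `hΛ` on `Λ`, and for each `λ` a compatible
family of distributions `h λ C` which factor as products of their one-measurement marginals,
averaging to `e`) if and only if `e` has a global section (a distribution on global
assignments marginalizing to each `e C`). -/
theorem factorizable_hidden_variable_iff_global_section
    {X O R : Type} [Fintype X] [DecidableEq X] [Fintype O] [DecidableEq O] [CommSemiring R]
    (MM : Finset (Finset X))
    (hcov : ∀ x : X, ∃ C ∈ MM, x ∈ C)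
    (hanti : ∀ C ∈ MM, ∀ C' ∈ MM, C ⊆ C' → C = C')
    (e : (C : Finset X) → ({x // x ∈ C} → O) → R)
    (hdist : ∀ C ∈ MM, ∑ s, e C s = 1)
    (hcompat : ∀ C ∈ MM, ∀ C' ∈ MM,
      marg (show C ∩ C' ⊆ C from inter_subset_left) (e C) =
      marg (show C ∩ C' ⊆ C' from inter_subset_right) (e C')) :
    (∃ (k : ℕ) (hΛ : Fin k → R) (h : Fin k → (C : Finset X) → ({x // x ∈ C} → O) → R),
      (∑ lam, hΛ lam = 1) ∧
      (∀ lam, ∀ C ∈ MM, ∑ s, h lam C s = 1) ∧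
      (∀ lam, ∀ C ∈ MM, ∀ C' ∈ MM,
        marg (show C ∩ C' ⊆ C from inter_subset_left) (h lam C) =
        marg (show C ∩ C' ⊆ C' from inter_subset_right) (h lam C')) ∧
      (∀ lam, ∀ C ∈ MM, ∀ s : {x // x ∈ C} → O,
        h lam C s = ∏ m : {x // x ∈ C},
          marg (show ({m.1} : Finset X) ⊆ C from Finset.singleton_subset_iff.mpr m.2)
            (h lam C) (resSec (Finset.singleton_subset_iff.mpr m.2) s)) ∧
      (∀ C ∈ MM, ∀ s : {x // x ∈ C} → O, e C s = ∑ lam, h lam C s * hΛ lam)) ↔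
    (∃ d : (X → O) → R, (∑ t, d t = 1) ∧
      ∀ C ∈ MM, ∀ s : {x // x ∈ C} → O, globMarg d C s = e C s) := by
  simpa only [IsFactorizableRealization, IsFactorizableModel, IsCompatibleFamily, IsGlobalSection,
    forall_and, and_assoc] using factorizable_hidden_variable_iff_global_section_general MM hcov e
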